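/- (Convergence of the iterative Chebyshev polynomial approximation algorithm.) Let S₁,…,S_d be pairwise commuting N×N complex matrices whose joint spectrum Λ = {λ_1,…,λ_N} is contained in the real cube [μ,ν] = [μ₁,ν₁] × ⋯ × [μ_d,ν_d], let h be a multivariate polynomial such that H = h(S₁,…,S_d) is invertible, and let g be a multivariate polynomial (in particular, the degree-K partial sum of the shifted Chebyshev expansion of 1/h on [μ,ν]) satisfying β := sup_{t ∈ [μ,ν]} |1 − h(t) g(t)| < 1. Then for every b ∈ ℂ^N the iterates x⁽ᵐ⁾ of the iterative approximation algorithm with G = g(S₁,…,S_d) converge exponentially to H⁻¹ b: for every r with β < r < 1 there exists C > 0 such that ‖x⁽ᵐ⁾ − H⁻¹ b‖₂ ≤ C ‖H⁻¹ b‖₂ rᵐ for all m ≥ 1. -/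

import Mathlib

open Matrix

/-- The Euclidean (ℓ²) norm of a vector in ℂ^N. -/
noncomputable def l2norm {N : ℕ} (v : Fin N → ℂ) : ℝ :=
  ‖(EuclideanSpace.equiv (Fin N) ℂ).symm v‖

/-- The polynomial graph filter `h(S₁,…,S_d) = ∑ h_{l₁,…,l_d} S₁^{l₁}⋯S_d^{l_d}` associated with
a multivariate polynomial `h` and matrices `S₁,…,S_d`. -/
noncomputable def polyFilter {N d : ℕ} (S : Fin d → Matrix (Fin N) (Fin N) ℂ)
    (h : MvPolynomial (Fin d) ℂ) : Matrix (Fin N) (Fin N) ℂ :=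
  ∑ m ∈ h.support, h.coeff m • (List.ofFn fun k => S k ^ m k).prod

/-! Put `x = H⁻¹ b`. The iteration gives `x⁽ᵐ⁾ - x = (1 - G H)ᵐ (-x)`, so by Gelfand's formula its
exponential rate is governed by the spectral radius of `1 - G H`. Reading off a diagonal entry is
an algebra homomorphism on upper triangular matrices, hence a common triangularization of the `S_k`
shows that the eigenvalues of `1 - G H` are the values of `1 - g h` at the joint spectrum, which are
at most `β` in modulus. -/

section Gelfand

open Filter

theorem eventually_norm_pow_le_of_spectralRadius_lt {A : Type*} [NormedRing A]
    [NormedAlgebra ℂ A] [CompleteSpace A] {a : A} {r : ℝ}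
    (ha : spectralRadius ℂ a < ENNReal.ofReal r) : ∀ᶠ n in atTop, ‖a ^ n‖ ≤ r ^ n := by
  have hr : 0 < r := ENNReal.ofReal_pos.1 (bot_le.trans_lt ha)
  filter_upwards [(spectrum.pow_norm_pow_one_div_tendsto_nhds_spectralRadius a).eventually_lt_const
    ha, eventually_ne_atTop 0] with n hn hn0
  have hroot : ‖a ^ n‖ ^ (n : ℝ)⁻¹ < r := by
    rwa [one_div, ENNReal.ofReal_lt_ofReal_iff hr] at hn
  calc ‖a ^ n‖ = (‖a ^ n‖ ^ (n : ℝ)⁻¹) ^ n :=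
        (Real.rpow_inv_natCast_pow (norm_nonneg _) hn0).symm
    _ ≤ r ^ n := pow_le_pow_left₀ (by positivity) hroot.le n

theorem exists_norm_pow_le_of_spectralRadius_lt {A : Type*} [NormedRing A]
    [NormedAlgebra ℂ A] [CompleteSpace A] {a : A} {r : ℝ}
    (ha : spectralRadius ℂ a < ENNReal.ofReal r) : ∃ C > 0, ∀ n : ℕ, ‖a ^ n‖ ≤ C * r ^ n := by
  have hr : 0 < r := ENNReal.ofReal_pos.1 (bot_le.trans_lt ha)
  have hO : (fun n ↦ a ^ n) =O[atTop] fun n : ℕ ↦ r ^ n :=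
    .of_bound' <| (eventually_norm_pow_le_of_spectralRadius_lt ha).mono fun n hn ↦
      hn.trans (le_abs_self _)
  obtain ⟨C, hC, hbound⟩ := Asymptotics.bound_of_isBigO_nat_atTop hO
  refine ⟨C, hC, fun n ↦ ?_⟩
  simpa only [Real.norm_of_nonneg (pow_pos hr n).le] using hbound (pow_pos hr n).ne'

theorem spectralRadius_lt_ofReal_of_forall_norm_lt {A : Type*} [NormedRing A]
    [NormedAlgebra ℂ A] [CompleteSpace A] {a : A} {r : ℝ} (hr : 0 < r)
    (ha : ∀ c ∈ spectrum ℂ a, ‖c‖ < r) : spectralRadius ℂ a < ENNReal.ofReal r := by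
  rcases subsingleton_or_nontrivial A with _ | _
  · simpa only [spectrum.SpectralRadius.of_subsingleton, ENNReal.ofReal_pos] using hr
  · exact spectrum.spectralRadius_lt_of_forall_lt a fun c hc ↦
      Real.lt_toNNReal_iff_coe_lt.2 (ha c hc)

end Gelfand

theorem l2norm_neg {N : ℕ} (v : Fin N → ℂ) : l2norm (-v) = l2norm v :=
  norm_neg ((EuclideanSpace.equiv (Fin N) ℂ).symm v)

open scoped Matrix.Norms.L2Operator in
theorem l2norm_mulVec_le {N : ℕ} (A : Matrix (Fin N) (Fin N) ℂ) (v : Fin N → ℂ) :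
    l2norm (A *ᵥ v) ≤ ‖A‖ * l2norm v :=
  A.l2_opNorm_mulVec ((EuclideanSpace.equiv (Fin N) ℂ).symm v)

open scoped Matrix.Norms.L2Operator in
theorem exists_l2norm_pow_mulVec_le {N : ℕ} {A : Matrix (Fin N) (Fin N) ℂ} {r : ℝ} (hr : 0 < r)
    (hA : ∀ c ∈ spectrum ℂ A, ‖c‖ < r) :
    ∃ C > 0, ∀ (m : ℕ) (v : Fin N → ℂ), l2norm ((A ^ m) *ᵥ v) ≤ C * l2norm v * r ^ m := by
  have : CompleteSpace (Matrix (Fin N) (Fin N) ℂ) := FiniteDimensional.complete ℂ _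
  obtain ⟨C, hC, hpow⟩ := exists_norm_pow_le_of_spectralRadius_lt
    (spectralRadius_lt_ofReal_of_forall_norm_lt hr hA)
  refine ⟨C, hC, fun m v ↦ ?_⟩
  calc l2norm ((A ^ m) *ᵥ v) ≤ ‖A ^ m‖ * l2norm v := l2norm_mulVec_le _ _
    _ ≤ C * r ^ m * l2norm v := mul_le_mul_of_nonneg_right (hpow m) (norm_nonneg _)
    _ = C * l2norm v * r ^ m := mul_right_comm _ _ _

section OrderedEval

variable {R A B : Type*} [CommSemiring R] [Semiring A] [Algebra R A] [Semiring B] [Algebra R B]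
  {d : ℕ}

/-- The value `∑ h_{l₁,…,l_d} S₁^{l₁}⋯S_d^{l_d}` of a polynomial at a tuple of elements of an
algebra, with the factors of each monomial multiplied in the order of the variables. This extends
`polyFilter` to arbitrary algebras, so that it can be transported along homomorphisms; as the `S_k`
need not commute, `MvPolynomial.aeval` does not apply. -/
noncomputable def orderedEval (S : Fin d → A) (h : MvPolynomial (Fin d) R) : A :=
  ∑ m ∈ h.support, h.coeff m • (List.ofFn fun k ↦ S k ^ m k).prod

theorem map_orderedEval (f : A →ₐ[R] B) (S : Fin d → A) (h : MvPolynomial (Fin d) R) :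
    f (orderedEval S h) = orderedEval (fun k ↦ f (S k)) h := by
  simp only [orderedEval, map_sum, map_smul, map_list_prod, List.map_ofFn, Function.comp_def,
    map_pow]

theorem orderedEval_eq_eval (t : Fin d → R) (h : MvPolynomial (Fin d) R) :
    orderedEval t h = MvPolynomial.eval t h := by
  simp only [orderedEval, MvPolynomial.eval_eq', List.prod_ofFn, smul_eq_mul]

end OrderedEval

section Triangular

variable {n : Type*} [Fintype n] [LinearOrder n]

theorem mul_apply_self_of_isUpperTriangular {R : Type*} [NonUnitalNonAssocSemiring R]
    {A B : Matrix n n R} (hA : A.IsUpperTriangular) (hB : B.IsUpperTriangular) (i : n) :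
    (A * B) i i = A i i * B i i := by
  rw [Matrix.mul_apply]
  refine Finset.sum_eq_single_of_mem i (Finset.mem_univ i) fun j _ hj ↦ ?_
  rcases hj.lt_or_gt with hji | hij
  · rw [hA hji, zero_mul]
  · rw [hB hij, mul_zero]

variable [DecidableEq n]

/-- The `i`-th diagonal entry as an algebra homomorphism on the upper triangular matrices. -/
def diagEntryHom (R : Type*) [CommSemiring R] (i : n) :
    blockTriangularSubalgebra R R (id : n → n) →ₐ[R] R where
  toFun A := A.1 i i
  map_one' := Matrix.one_apply_eq i
  map_mul' A B := mul_apply_self_of_isUpperTriangular A.2 B.2 i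
  map_zero' := rfl
  map_add' _ _ := rfl
  commutes' _ := Matrix.algebraMap_matrix_apply.trans (if_pos rfl)

theorem mem_spectrum_iff_of_isUpperTriangular {K : Type*} [Field K] {A : Matrix n n K}
    (hA : A.IsUpperTriangular) {c : K} : c ∈ spectrum K A ↔ ∃ i, c = A i i := by
  rw [Matrix.mem_spectrum_iff_isRoot_charpoly, charpoly_of_isUpperTriangular A hA]
  simp [Polynomial.IsRoot, Polynomial.eval_prod, Finset.prod_eq_zero_iff, sub_eq_zero]

theorem mem_spectrum_one_sub_orderedEval_mul_iff {K : Type*} [Field K] {d : ℕ}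
    {S : Fin d → Matrix n n K} (P : (Matrix n n K)ˣ)
    (htri : ∀ k, (P.1 * S k * P⁻¹.1).IsUpperTriangular) (g h : MvPolynomial (Fin d) K) {c : K} :
    c ∈ spectrum K (1 - orderedEval S g * orderedEval S h) ↔
      ∃ i, c = 1 - MvPolynomial.eval (fun k ↦ (P.1 * S k * P⁻¹.1) i i) g *
        MvPolynomial.eval (fun k ↦ (P.1 * S k * P⁻¹.1) i i) h := by
  let conj := MulSemiringAction.toAlgEquiv K (Matrix n n K) (ConjAct.toConjAct P)
  let T (k : Fin d) : blockTriangularSubalgebra K K (id : n → n) := ⟨P.1 * S k * P⁻¹.1, htri k⟩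
  let D := 1 - orderedEval T g * orderedEval T h
  have conj_orderedEval (p : MvPolynomial (Fin d) K) :
      conj (orderedEval S p) = (orderedEval T p).1 :=
    (map_orderedEval conj.toAlgHom S p).trans (map_orderedEval (Subalgebra.val _) T p).symm
  have conj_eq : conj (1 - orderedEval S g * orderedEval S h) = D.1 := by
    rw [map_sub, map_one, map_mul, conj_orderedEval, conj_orderedEval]
    rfl
  have diag_eq (i : n) : D.1 i i =
      1 - MvPolynomial.eval (fun k ↦ (T k).1 i i) g *
        MvPolynomial.eval (fun k ↦ (T k).1 i i) h := by
    change diagEntryHom K i D = _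
    rw [map_sub, map_one, map_mul, map_orderedEval, map_orderedEval, orderedEval_eq_eval,
      orderedEval_eq_eval]
    rfl
  rw [← AlgEquiv.spectrum_eq conj, conj_eq, mem_spectrum_iff_of_isUpperTriangular D.2]
  simp only [diag_eq, T]

end Triangular

section Iteration

variable {m n R : Type*} [Fintype m] [Fintype n] [Ring R]

/-- The sequences `e`, `z`, `x` are produced by the iterative approximation algorithm for solving
`H x = b` with approximate inverse `G`. The value `z 0` is unconstrained. -/
structure IsIterativeApproximation (H : Matrix m n R) (G : Matrix n m R) (b : m → R)
    (e : ℕ → m → R) (z x : ℕ → n → R) : Prop where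
  residual_zero : e 0 = b
  iterate_zero : x 0 = 0
  correction_succ (k : ℕ) : z (k + 1) = G *ᵥ e k
  residual_succ (k : ℕ) : e (k + 1) = e k - H *ᵥ z (k + 1)
  iterate_succ (k : ℕ) : x (k + 1) = x k + z (k + 1)

namespace IsIterativeApproximation

variable {H : Matrix m n R} {G : Matrix n m R} {b : m → R} {e : ℕ → m → R} {z x : ℕ → n → R}

theorem residual_eq (hx : IsIterativeApproximation H G b e z x) (k : ℕ) :
    e k = b - H *ᵥ x k := by
  induction k with
  | zero => rw [hx.residual_zero, hx.iterate_zero, mulVec_zero, sub_zero]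
  | succ k ih => rw [hx.residual_succ, hx.iterate_succ, ih, mulVec_add, sub_sub]

theorem iterate_sub_eq_pow_mulVec [DecidableEq n] (hx : IsIterativeApproximation H G b e z x)
    {y : n → R} (hy : H *ᵥ y = b) (k : ℕ) : x k - y = ((1 - G * H) ^ k) *ᵥ (-y) := by
  induction k with
  | zero => rw [hx.iterate_zero, pow_zero, one_mulVec, zero_sub]
  | succ k ih =>
    have residual : e k = -(H *ᵥ (x k - y)) := by rw [hx.residual_eq, mulVec_sub, hy, neg_sub]
    calc x (k + 1) - y = (x k - y) - G *ᵥ (H *ᵥ (x k - y)) := by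
          rw [hx.iterate_succ, hx.correction_succ, residual, mulVec_neg]
          abel
      _ = (1 - G * H) *ᵥ (x k - y) := by rw [sub_mulVec, one_mulVec, mulVec_mulVec]
      _ = ((1 - G * H) ^ (k + 1)) *ᵥ (-y) := by rw [ih, mulVec_mulVec, ← pow_succ']

end IsIterativeApproximation

end Iteration

theorem norm_eval_ofReal_le_sSup_cube {ι : Type*} (p : MvPolynomial ι ℂ) {μ ν t : ι → ℝ}
    (ht : ∀ k, t k ∈ Set.Icc (μ k) (ν k)) :
    ‖MvPolynomial.eval (fun k ↦ (t k : ℂ)) p‖ ≤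
      sSup ((fun s : ι → ℝ ↦ ‖MvPolynomial.eval (fun k ↦ (s k : ℂ)) p‖) ''
        {s | ∀ k, s k ∈ Set.Icc (μ k) (ν k)}) := by
  have hcont : Continuous fun s : ι → ℝ ↦ ‖MvPolynomial.eval (fun k ↦ (s k : ℂ)) p‖ :=
    ((MvPolynomial.continuous_eval p).comp (by fun_prop)).norm
  have hcube : IsCompact {s : ι → ℝ | ∀ k, s k ∈ Set.Icc (μ k) (ν k)} :=
    isCompact_pi_infinite fun _ ↦ isCompact_Icc
  exact le_csSup (hcube.bddAbove_image hcont.continuousOn) (Set.mem_image_of_mem _ ht)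

theorem ICPA_exponential_convergence_general {N d : ℕ}
    (S : Fin d → Matrix (Fin N) (Fin N) ℂ) (P : (Matrix (Fin N) (Fin N) ℂ)ˣ)
    (htri : ∀ k, (P.1 * S k * P⁻¹.1).IsUpperTriangular)
    (lam : Fin N → Fin d → ℂ) (hlam : ∀ i k, lam i k = (P.1 * S k * P⁻¹.1) i i)
    (h g : MvPolynomial (Fin d) ℂ) {r : ℝ} (hr : 0 < r)
    (hlt : ∀ i, ‖1 - MvPolynomial.eval (lam i) h * MvPolynomial.eval (lam i) g‖ < r) :
    ∃ C > 0, ∀ (b : Fin N → ℂ) (e z x : ℕ → Fin N → ℂ),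
      IsIterativeApproximation (polyFilter S h) (polyFilter S g) b e z x →
      ∀ y, polyFilter S h *ᵥ y = b → ∀ m, l2norm (x m - y) ≤ C * l2norm y * r ^ m := by
  obtain rfl : lam = fun i k ↦ (P.1 * S k * P⁻¹.1) i i := funext₂ hlam
  have hspec : ∀ c ∈ spectrum ℂ (1 - polyFilter S g * polyFilter S h), ‖c‖ < r := by
    intro c hc
    obtain ⟨i, rfl⟩ := (mem_spectrum_one_sub_orderedEval_mul_iff P htri g h).1 hc
    simpa only [mul_comm] using hlt i
  obtain ⟨C, hC, hpow⟩ := exists_l2norm_pow_mulVec_le hr hspec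
  refine ⟨C, hC, fun b e z x hx y hy m ↦ ?_⟩
  rw [hx.iterate_sub_eq_pow_mulVec hy, ← l2norm_neg y]
  exact hpow m (-y)

/-- convergence of the ICPA algorithm: if the joint spectrum of the commuting
matrices `S₁,…,S_d` lies in the real cube `[μ, ν]`, `H = h(S₁,…,S_d)` is invertible, and `g` is
a multivariate polynomial with `β = sup_{t ∈ [μ,ν]} |1 − h(t) g(t)| < 1`, then for every
`r ∈ (β, 1)` there is `C > 0` such that for every `b` the iterates of the iterative
approximation algorithm with `G = g(S₁,…,S_d)` satisfy
`‖x⁽ᵐ⁾ − H⁻¹ b‖₂ ≤ C ‖H⁻¹ b‖₂ rᵐ` for all `m ≥ 1`. -/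
theorem ICPA_exponential_convergence {N d : ℕ}
    (S : Fin d → Matrix (Fin N) (Fin N) ℂ)
    (hcomm : ∀ k k' : Fin d, Commute (S k) (S k'))
    (U : Matrix (Fin N) (Fin N) ℂ) (hU : U ∈ Matrix.unitaryGroup (Fin N) ℂ)
    (htri : ∀ k : Fin d, (U * S k * Uᴴ).BlockTriangular (id : Fin N → Fin N))
    (lam : Fin N → Fin d → ℂ)
    (hlam : ∀ (i : Fin N) (k : Fin d), lam i k = (U * S k * Uᴴ) i i)
    (μ ν : Fin d → ℝ)
    (hspec : ∀ (i : Fin N) (k : Fin d),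
      ∃ t : ℝ, lam i k = (t : ℂ) ∧ t ∈ Set.Icc (μ k) (ν k))
    (h g : MvPolynomial (Fin d) ℂ)
    (H : Matrix (Fin N) (Fin N) ℂ) (hH : H = polyFilter S h) (hinv : IsUnit H)
    (β : ℝ)
    (hβ : β = sSup ((fun t : Fin d → ℝ =>
      ‖1 - MvPolynomial.eval (fun k => (t k : ℂ)) h *
        MvPolynomial.eval (fun k => (t k : ℂ)) g‖) ''
      {t : Fin d → ℝ | ∀ k : Fin d, t k ∈ Set.Icc (μ k) (ν k)}))
    (hβ1 : β < 1) :
    ∀ r : ℝ, β < r → r < 1 →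
      ∃ C : ℝ, 0 < C ∧
        ∀ (b : Fin N → ℂ) (e z x : ℕ → Fin N → ℂ),
          e 0 = b → x 0 = 0 →
          (∀ m : ℕ, z (m + 1) = (polyFilter S g).mulVec (e m)) →
          (∀ m : ℕ, e (m + 1) = e m - H.mulVec (z (m + 1))) →
          (∀ m : ℕ, x (m + 1) = x m + z (m + 1)) →
          ∀ m : ℕ, 1 ≤ m →
            l2norm (x m - H⁻¹.mulVec b) ≤ C * l2norm (H⁻¹.mulVec b) * r ^ m := by
  subst hH hβ
  intro r hβr _
  have hr : 0 < r :=
    (Real.sSup_nonneg (Set.forall_mem_image.2 fun _ _ ↦ norm_nonneg _)).trans_lt hβr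
  have hlt (i : Fin N) : ‖1 - MvPolynomial.eval (lam i) h * MvPolynomial.eval (lam i) g‖ < r := by
    choose t hlam_eq ht using hspec i
    have hle := norm_eval_ofReal_le_sSup_cube (1 - h * g) ht
    simp only [map_sub, map_one, map_mul, ← hlam_eq] at hle
    exact hle.trans_lt hβr
  obtain ⟨C, hC, hconv⟩ := ICPA_exponential_convergence_general S (Unitary.toUnits ⟨U, hU⟩) htri
    lam hlam h g hr hlt
  refine ⟨C, hC, fun b e z x he0 hx0 hz he hx m _ ↦
    hconv b e z x ⟨he0, hx0, hz, he, hx⟩ _ ?_ m⟩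
  rw [mulVec_mulVec, mul_nonsing_inv _ ((isUnit_iff_isUnit_det _).1 hinv), one_mulVec]
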